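/- Minimum communication cost under a limited-knowledge adversary (cost part of Theorem 1): let S and downloads Y_1, …, Y_d be random variables on a common probability space taking values in finite sets, let z_ro, z_wo, z_rw ≥ 0 and k ≤ d be integers with d > 2z_rw + 2z_wo + z_ro, set z_r = z_ro + z_rw and z_w = z_wo + z_rw, and let α, β ≥ 0 be reals. Suppose H(Y_i) ≤ β for every i, H(S | Y_Z) = H(S) for every Z ⊆ {1,…,d} with |Z| = z_r, H(S | Y_B) = 0 for every B ⊆ {1,…,d} with |B| = d − z_w, and H(S) = (k − 2z_rw − z_wo − z_ro)·α. Then the total download satisfies d·β ≥ d·(k − 2z_rw − z_wo − z_ro)·α / (d − 2z_rw − z_wo − z_ro). -/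

import Mathlib

open Finset

/-- The probability that the random variable `X` takes the value `a`, under the
probability mass function `p` on the finite sample space `Ω`. -/
noncomputable def probOf {Ω : Type*} [Fintype Ω] (p : Ω → ℝ) {A : Type*} [DecidableEq A]
    (X : Ω → A) (a : A) : ℝ :=
  ∑ ω ∈ Finset.univ.filter fun ω => X ω = a, p ω

/-- Shannon entropy of the random variable `X` with logarithm base `b`. -/
noncomputable def entropy {Ω : Type*} [Fintype Ω] (b : ℝ) (p : Ω → ℝ) {A : Type*}
    [Fintype A] [DecidableEq A] (X : Ω → A) : ℝ :=
  -∑ a : A, probOf p X a * Real.logb b (probOf p X a)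

/-- Conditional Shannon entropy `H(X | Y)` with logarithm base `b`,
defined by the chain rule `H(X | Y) = H(X, Y) - H(Y)`. -/
noncomputable def condEntropy {Ω : Type*} [Fintype Ω] (b : ℝ) (p : Ω → ℝ) {A B : Type*}
    [Fintype A] [DecidableEq A] [Fintype B] [DecidableEq B] (X : Ω → A) (Y : Ω → B) : ℝ :=
  entropy b p (fun ω => (X ω, Y ω)) - entropy b p Y

/-- The tuple `X_A = (X_i)_{i ∈ A}` of a family of random variables. -/
def tupleOn {Ω : Type*} {N : ℕ} {V : Fin N → Type*} (X : ∀ i, Ω → V i) (A : Finset (Fin N)) :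
    Ω → ∀ i : A, V i :=
  fun ω i => X i ω

section Entropy

variable {Ω A B : Type*} [Fintype Ω] {b : ℝ} {p : Ω → ℝ} [DecidableEq A] [DecidableEq B]

lemma probOf_nonneg (hp : ∀ ω, 0 ≤ p ω) (X : Ω → A) (a : A) : 0 ≤ probOf p X a :=
  Finset.sum_nonneg fun ω _ => hp ω

lemma le_probOf_self (hp : ∀ ω, 0 ≤ p ω) (X : Ω → A) (ω : Ω) : p ω ≤ probOf p X (X ω) :=
  Finset.single_le_sum (f := p) (fun ω _ => hp ω) (by simp)

lemma probOf_le_probOf_comp (hp : ∀ ω, 0 ≤ p ω) (X : Ω → A) (f : A → B) (a : A) :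
    probOf p X a ≤ probOf p (fun ω => f (X ω)) (f a) := by
  refine Finset.sum_le_sum_of_subset_of_nonneg (fun ω hω => ?_) fun ω _ _ => hp ω
  simp only [Finset.mem_filter, Finset.mem_univ, true_and] at hω ⊢
  rw [hω]

lemma sum_probOf_mul [Fintype A] (p : Ω → ℝ) (X : Ω → A) (g : A → ℝ) :
    ∑ a, probOf p X a * g a = ∑ ω, p ω * g (X ω) := by
  rw [← Finset.sum_fiberwise (s := Finset.univ) (g := X)]
  refine Finset.sum_congr rfl fun a _ => ?_
  rw [probOf, Finset.sum_mul]
  refine Finset.sum_congr rfl fun ω hω => ?_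
  rw [(Finset.mem_filter.mp hω).2]

lemma sum_probOf [Fintype A] (p : Ω → ℝ) (X : Ω → A) : ∑ a, probOf p X a = ∑ ω, p ω := by
  simpa using sum_probOf_mul p X fun _ => 1

lemma entropy_eq_neg_sum [Fintype A] (b : ℝ) (p : Ω → ℝ) (X : Ω → A) :
    entropy b p X = -∑ ω, p ω * Real.logb b (probOf p X (X ω)) := by
  rw [entropy, sum_probOf_mul p X fun a => Real.logb b (probOf p X a)]

/-- Entropy does not increase under a deterministic function. -/
lemma entropy_comp_le [Fintype A] [Fintype B] (hb : 1 < b) (hp : ∀ ω, 0 ≤ p ω)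
    (X : Ω → A) (f : A → B) : entropy b p (fun ω => f (X ω)) ≤ entropy b p X := by
  rw [entropy_eq_neg_sum, entropy_eq_neg_sum]
  refine neg_le_neg (Finset.sum_le_sum fun ω _ => ?_)
  rcases (hp ω).eq_or_lt with h | h
  · simp [← h]
  · exact mul_le_mul_of_nonneg_left (Real.logb_le_logb_of_le hb
      (h.trans_le (le_probOf_self hp X ω)) (probOf_le_probOf_comp hp X f (X ω))) h.le

/-- Subadditivity of entropy. -/
lemma entropy_prod_le [Fintype A] [Fintype B] (hb : 1 < b) (hp : ∀ ω, 0 ≤ p ω)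
    (hp1 : ∑ ω, p ω = 1) (X : Ω → A) (Y : Ω → B) :
    entropy b p (fun ω => (X ω, Y ω)) ≤ entropy b p X + entropy b p Y := by
  set W : Ω → A × B := fun ω => (X ω, Y ω)
  have hlog : 0 < Real.log b := Real.log_pos hb
  let ratio : A × B → ℝ := fun c => probOf p X c.1 * probOf p Y c.2 / probOf p W c
  have hterm (ω : Ω) : p ω * (Real.log (probOf p X (X ω)) + Real.log (probOf p Y (Y ω)) -
      Real.log (probOf p W (W ω))) ≤ p ω * ratio (W ω) - p ω := by
    rcases (hp ω).eq_or_lt with h | h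
    · simp [← h]
    have hX := h.trans_le (le_probOf_self hp X ω)
    have hY := h.trans_le (le_probOf_self hp Y ω)
    have hW := h.trans_le (le_probOf_self hp W ω)
    have := Real.log_le_sub_one_of_pos (div_pos (mul_pos hX hY) hW)
    rw [Real.log_div (mul_pos hX hY).ne' hW.ne', Real.log_mul hX.ne' hY.ne'] at this
    have := mul_le_mul_of_nonneg_left this h.le
    rwa [mul_sub_one] at this
  have hratio : ∑ ω, p ω * ratio (W ω) ≤ 1 := by
    rw [← sum_probOf_mul p W ratio]
    calc ∑ c, probOf p W c * ratio c ≤ ∑ c : A × B, probOf p X c.1 * probOf p Y c.2 := by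
          refine Finset.sum_le_sum fun c _ => ?_
          have hXY := mul_nonneg (probOf_nonneg hp X c.1) (probOf_nonneg hp Y c.2)
          rcases eq_or_ne (probOf p W c) 0 with h | h
          · simpa [h] using hXY
          · exact (mul_div_cancel₀ _ h).le
      _ = 1 := by
          rw [Fintype.sum_prod_type, ← Finset.sum_mul_sum, sum_probOf, sum_probOf, hp1, one_mul]
  have hsum := Finset.sum_le_sum fun ω (_ : ω ∈ Finset.univ) => hterm ω
  rw [Finset.sum_sub_distrib, hp1] at hsum
  have hnonpos := div_nonpos_of_nonpos_of_nonneg (hsum.trans (sub_nonpos.mpr hratio)) hlog.le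
  rw [entropy_eq_neg_sum, entropy_eq_neg_sum, entropy_eq_neg_sum, ← sub_nonpos]
  refine le_of_eq_of_le ?_ hnonpos
  simp only [Real.logb, mul_div_assoc', ← Finset.sum_div, mul_add, mul_sub,
    Finset.sum_add_distrib, Finset.sum_sub_distrib]
  ring

end Entropy

section Tuples

variable {Ω : Type*} [Fintype Ω] {b : ℝ} {p : Ω → ℝ} {N : ℕ} {V : Fin N → Type*}
  [∀ i, Fintype (V i)] [∀ i, DecidableEq (V i)]

lemma entropy_tupleOn_insert_le (hb : 1 < b) (hp : ∀ ω, 0 ≤ p ω) (hp1 : ∑ ω, p ω = 1)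
    (X : ∀ i, Ω → V i) (i : Fin N) (T : Finset (Fin N)) :
    entropy b p (tupleOn X (insert i T)) ≤ entropy b p (tupleOn X T) + entropy b p (X i) := by
  let extend : (∀ j : T, V j) × V i → ∀ j : (insert i T : Finset (Fin N)), V j := fun c j =>
    if h : (j : Fin N) ∈ T then c.1 ⟨j, h⟩
    else ((Finset.mem_insert.mp j.2).resolve_right h).symm ▸ c.2
  have hext : tupleOn X (insert i T) = fun ω => extend (tupleOn X T ω, X i ω) := by
    funext ω ⟨j, hj⟩
    by_cases h : j ∈ T
    · simp [extend, tupleOn, h]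
    · obtain rfl := (Finset.mem_insert.mp hj).resolve_right h
      simp [extend, tupleOn, h]
  rw [hext]
  exact (entropy_comp_le hb hp (fun ω => (tupleOn X T ω, X i ω)) extend).trans
    (entropy_prod_le hb hp hp1 _ _)

lemma entropy_tupleOn_union_le (hb : 1 < b) (hp : ∀ ω, 0 ≤ p ω) (hp1 : ∑ ω, p ω = 1)
    (X : ∀ i, Ω → V i) (T U : Finset (Fin N)) :
    entropy b p (tupleOn X (U ∪ T)) ≤ entropy b p (tupleOn X T) + ∑ i ∈ U, entropy b p (X i) := by
  induction U using Finset.induction_on with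
  | empty => rw [Finset.empty_union, Finset.sum_empty, add_zero]
  | insert i U hi ih =>
    rw [Finset.insert_union, Finset.sum_insert hi]
    linarith [entropy_tupleOn_insert_le hb hp hp1 X i (U ∪ T)]

/-- If `S` is independent of the downloads in `Z` and determined by those in the larger set `B`,
then its entropy is at most the total entropy of the downloads in `B \ Z`. -/
lemma entropy_le_sum_sdiff {σ : Type*} [Fintype σ] [DecidableEq σ] (hb : 1 < b)
    (hp : ∀ ω, 0 ≤ p ω) (hp1 : ∑ ω, p ω = 1) (S : Ω → σ) (X : ∀ i, Ω → V i)
    {Z B : Finset (Fin N)} (hZB : Z ⊆ B)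
    (hpriv : condEntropy b p S (tupleOn X Z) = entropy b p S)
    (hdec : condEntropy b p S (tupleOn X B) = 0) :
    entropy b p S ≤ ∑ i ∈ B \ Z, entropy b p (X i) := by
  have hmono : entropy b p (fun ω => (S ω, tupleOn X Z ω)) ≤
      entropy b p (fun ω => (S ω, tupleOn X B ω)) :=
    entropy_comp_le hb hp (fun ω => (S ω, tupleOn X B ω))
      fun c => (c.1, fun j : Z => c.2 ⟨j, hZB j.2⟩)
  have hunion := entropy_tupleOn_union_le hb hp hp1 X Z (B \ Z)
  rw [Finset.sdiff_union_of_subset hZB] at hunion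
  unfold condEntropy at hpriv hdec
  linarith

end Tuples

/-- Minimum communication cost under a limited-knowledge adversary (cost part of
Theorem 1): if each download `Y_i` has entropy at most `β`, any `z_r` downloads
are independent of the secret, the user can decode from any `d - z_w` downloads,
and the secret has the capacity-achieving size `(k - 2z_rw - z_wo - z_ro)·α`,
then `d·β ≥ d·(k - 2z_rw - z_wo - z_ro)·α / (d - 2z_rw - z_wo - z_ro)`. -/
theorem limited_knowledge_min_communication_cost
    {Ω : Type*} [Fintype Ω] (b : ℝ) (hb : 1 < b)
    (p : Ω → ℝ) (hp : ∀ ω, 0 ≤ p ω) (hp1 : ∑ ω, p ω = 1)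
    {σ : Type*} [Fintype σ] [DecidableEq σ] (S : Ω → σ)
    (d k zro zwo zrw : ℕ) (hkd : k ≤ d) (hd : 2 * zrw + 2 * zwo + zro < d)
    {V : Fin d → Type*} [∀ i, Fintype (V i)] [∀ i, DecidableEq (V i)]
    (Y : ∀ i, Ω → V i)
    (α β : ℝ) (hα : 0 ≤ α) (hβ : 0 ≤ β)
    (hdl : ∀ i, entropy b p (Y i) ≤ β)
    (hpriv : ∀ Z : Finset (Fin d), Z.card = zro + zrw →
      condEntropy b p S (tupleOn Y Z) = entropy b p S)
    (hdec : ∀ B : Finset (Fin d), B.card = d - (zwo + zrw) →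
      condEntropy b p S (tupleOn Y B) = 0)
    (hS : entropy b p S = ((k : ℝ) - 2 * (zrw : ℝ) - (zwo : ℝ) - (zro : ℝ)) * α) :
    (d : ℝ) * β ≥
      (d : ℝ) * (((k : ℝ) - 2 * (zrw : ℝ) - (zwo : ℝ) - (zro : ℝ)) * α) /
        ((d : ℝ) - 2 * (zrw : ℝ) - (zwo : ℝ) - (zro : ℝ)) := by
  obtain ⟨B, -, hB⟩ := Finset.exists_subset_card_eq
    (s := (Finset.univ : Finset (Fin d))) (n := d - (zwo + zrw)) (by simp)
  obtain ⟨Z, hZB, hZ⟩ := Finset.exists_subset_card_eq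
    (s := B) (n := zro + zrw) (by omega)
  have hsum := (entropy_le_sum_sdiff hb hp hp1 S Y hZB (hpriv Z hZ) (hdec B hB)).trans
    (Finset.sum_le_card_nsmul _ _ β fun i _ => hdl i)
  have hcard : ((B \ Z).card : ℝ) = (d : ℝ) - 2 * zrw - zwo - zro := by
    have h : (B \ Z).card + (2 * zrw + zwo + zro) = d := by
      rw [Finset.card_sdiff_of_subset hZB]
      omega
    have h' : ((B \ Z).card : ℝ) + (2 * zrw + zwo + zro) = d := by exact_mod_cast h
    linarith
  have hpos : (0 : ℝ) < (d : ℝ) - 2 * zrw - zwo - zro := by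
    have h : (2 * zrw + 2 * zwo + zro : ℝ) < d := by exact_mod_cast hd
    have := zwo.cast_nonneg (α := ℝ)
    linarith
  rw [nsmul_eq_mul, hcard, hS] at hsum
  rw [ge_iff_le, mul_div_assoc]
  refine mul_le_mul_of_nonneg_left ?_ d.cast_nonneg
  rwa [div_le_iff₀' hpos]
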